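/- Let M ∈ {0,1}^{m×n} be the adjacency matrix of a bipartite graph such that every subset S' ⊆ [n] with |S'| ≤ 2k satisfies |N(S')| ≥ d(1−ε)|S'| and every left vertex has degree at most d(1+ε), where ε ∈ (0,1/5). Then for any x ∈ ℝⁿ with Mx = 0 and any subset S ⊆ [n] with |S| ≤ k, ‖x_S‖₁ ≤ (4ε/(1−5ε))·‖x‖₁. -/

import Mathlib

open Matrix
open scoped Classical

theorem aux_abel (a b : ℕ → ℝ) (ha : Antitone a) (h0 : ∀ i, 0 ≤ a i) (s : ℕ)
    (hb : ∀ t ≤ s, ∑ i ∈ Finset.range t, b i ≤ 0) : ∑ i ∈ Finset.range s, b i * a i ≤ 0 := by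
  have key : ∀ t, t + 1 ≤ s → ∑ i ∈ Finset.range (t+1), b i * a i
      ≤ a t * ∑ i ∈ Finset.range (t+1), b i := by
    intro t
    induction t with
    | zero => intro _; simp [mul_comm]
    | succ t ih =>
      intro h
      rw [Finset.sum_range_succ, Finset.sum_range_succ (fun i => b i)]
      have h1 := ih (by omega)
      have h2 := hb (t+1) (by omega)
      have h3 := ha (Nat.le_succ t)
      simp only [Nat.succ_eq_add_one] at h3
      nlinarith
  rcases s with _ | s
  · simp
  · have := key s le_rfl
    have h2 := hb (s+1) le_rfl
    nlinarith [h0 s]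

theorem aux_top (a : ℕ → ℝ) (ha : Antitone a) (T : Finset ℕ) :
    ∑ i ∈ T, a i ≤ ∑ i ∈ Finset.range T.card, a i := by
  set R := Finset.range T.card with hR
  have hc : (T \ R).card = (R \ T).card := by
    apply Finset.card_sdiff_comm
    simp [hR]
  rw [← Finset.sum_inter_add_sum_sdiff T R, ← Finset.sum_inter_add_sum_sdiff R T, Finset.inter_comm R T]
  have h1 : ∑ i ∈ T \ R, a i ≤ (T \ R).card • a T.card := by
    apply Finset.sum_le_card_nsmul
    intro i hi
    simp [hR] at hi
    exact ha hi.2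
  have h2 : (R \ T).card • a T.card ≤ ∑ i ∈ R \ T, a i := by
    apply Finset.card_nsmul_le_sum
    intro i hi
    simp [hR] at hi
    exact ha hi.1.le
  rw [hc] at h1
  linarith

theorem aux_window (a e : ℕ → ℝ) (ha : Antitone a) (h0 : ∀ i, 0 ≤ a i) (he : ∀ i, 0 ≤ e i)
    (s n : ℕ) (hs : 0 < s) (C : ℝ)
    (hw : ∀ T ⊆ Finset.Ico s n, T.card ≤ s → ∑ i ∈ T, e i ≤ C * s) :
    ∑ i ∈ Finset.Ico s n, a i * e i ≤ C * ∑ i ∈ Finset.range n, a i := by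
  have h1 : ∀ i ∈ Finset.Ico s n, s * a i ≤
      ∑ u ∈ Finset.range n, if u < i ∧ i ≤ u + s then a u else 0 := by
    intro i hi
    rw [Finset.mem_Ico] at hi
    rw [← Finset.sum_filter]
    have : (Finset.range n).filter (fun u => u < i ∧ i ≤ u + s) = Finset.Ico (i - s) i := by
      ext u; simp; omega
    rw [this]
    have h2 : (Finset.Ico (i-s) i).card • a i ≤ ∑ u ∈ Finset.Ico (i-s) i, a u := by
      apply Finset.card_nsmul_le_sum
      intro u hu
      simp at hu
      exact ha hu.2.le
    have h3 : i - (i - s) = s := by omega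
    simpa [h3] using h2
  have h2 : s * ∑ i ∈ Finset.Ico s n, a i * e i ≤ s * (C * ∑ i ∈ Finset.range n, a i) := by
    calc s * ∑ i ∈ Finset.Ico s n, a i * e i = ∑ i ∈ Finset.Ico s n, (s * a i) * e i := by
          rw [Finset.mul_sum]; exact Finset.sum_congr rfl fun i _ => by ring
      _ ≤ ∑ i ∈ Finset.Ico s n, (∑ u ∈ Finset.range n, if u < i ∧ i ≤ u + s then a u else 0) * e i :=
          Finset.sum_le_sum fun i hi => mul_le_mul_of_nonneg_right (h1 i hi) (he i)
      _ = ∑ u ∈ Finset.range n, a u * ∑ i ∈ (Finset.Ico s n).filter (fun i => u < i ∧ i ≤ u + s), e i := by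
          simp_rw [Finset.sum_mul, Finset.mul_sum, Finset.sum_filter]
          rw [Finset.sum_comm]
          refine Finset.sum_congr rfl fun u _ => Finset.sum_congr rfl fun i _ => ?_
          split_ifs <;> simp
      _ ≤ ∑ u ∈ Finset.range n, a u * (C * s) := by
          refine Finset.sum_le_sum fun u _ => mul_le_mul_of_nonneg_left ?_ (h0 u)
          apply hw _ (Finset.filter_subset _ _)
          calc _ ≤ (Finset.Ioc u (u+s)).card := by
                apply Finset.card_le_card
                intro i; simp
            _ = s := by simp
      _ = s * (C * ∑ i ∈ Finset.range n, a i) := by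
          rw [← Finset.sum_mul]; ring
  exact le_of_mul_le_mul_left h2 (by exact_mod_cast hs)

theorem aux_card {m : ℕ} (N : ℕ → Finset (Fin m)) (U : Finset (Fin m)) (T : Finset ℕ) :
    ∑ i ∈ T, (N i ∩ U).card + (U ∪ T.biUnion N).card ≤ U.card + ∑ i ∈ T, (N i).card := by
  induction T using Finset.induction_on with
  | empty => simp
  | insert j T hj ih =>
    rw [Finset.sum_insert hj, Finset.sum_insert hj, Finset.biUnion_insert]
    have h1 : (U ∪ (N j ∪ T.biUnion N)) ⊆ (U ∪ T.biUnion N) ∪ (N j \ U) := by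
      intro y
      simp only [Finset.mem_union, Finset.mem_sdiff]
      tauto
    have h2 := (Finset.card_le_card h1).trans (Finset.card_union_le _ _)
    have h3 := Finset.card_sdiff_add_card_inter (N j) U
    omega

theorem aux_prefix {m : ℕ} (N : ℕ → Finset (Fin m)) (t : ℕ) :
    ∑ i ∈ Finset.range t, (N i ∩ (Finset.range i).biUnion N).card
      + ((Finset.range t).biUnion N).card = ∑ i ∈ Finset.range t, (N i).card := by
  induction t with
  | zero => simp
  | succ t ih =>
    rw [Finset.sum_range_succ, Finset.sum_range_succ, Finset.range_add_one, Finset.biUnion_insert]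
    have := Finset.card_union_add_card_inter (N t) ((Finset.range t).biUnion N)
    omega

theorem aux_row {m : ℕ} (N : ℕ → Finset (Fin m)) (x : ℕ → ℝ) (y : Fin m) (s : ℕ) :
    ∑ i ∈ Finset.range s, ((if y ∈ N i then |x i| else 0)
      - 2 * (if y ∈ N i ∩ (Finset.range i).biUnion N then |x i| else 0))
    ≤ |∑ i ∈ Finset.range s, if y ∈ N i then x i else 0| := by
  induction s with
  | zero => simp
  | succ s ih =>
    rw [Finset.sum_range_succ, Finset.sum_range_succ]
    by_cases hy : y ∈ N s
    · by_cases hu : y ∈ (Finset.range s).biUnion N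
      · simp only [hy, hu, Finset.mem_inter, and_self, if_true]
        have := abs_sub_abs_le_abs_sub (∑ i ∈ Finset.range s, if y ∈ N i then x i else 0) (- x s)
        simp only [abs_neg, sub_neg_eq_add] at this
        simp only [Finset.mem_inter] at ih
        linarith
      · have h : ∀ i ∈ Finset.range s, y ∉ N i := by
          intro i hi hyi
          exact hu (Finset.mem_biUnion.2 ⟨i, hi, hyi⟩)
        have h0 : ∑ i ∈ Finset.range s, (if y ∈ N i then x i else 0) = 0 :=
          Finset.sum_eq_zero fun i hi => by simp [h i hi]
        rw [h0] at ih ⊢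
        simp only [abs_zero] at ih
        simp only [hy, hu, Finset.mem_inter, and_false, if_true, if_false]
        simp only [Finset.mem_inter] at ih
        simp only [zero_add]
        linarith
    · simp only [hy, Finset.mem_inter, false_and, if_false]
      simp only [Finset.mem_inter] at ih
      simpa using ih

theorem aux_main {m : ℕ} (n k s : ℕ) (N : ℕ → Finset (Fin m)) (x : ℕ → ℝ)
    (d ε : ℝ) (hd : 0 < d) (hε0 : 0 < ε)
    (hexp : ∀ T ⊆ Finset.range n, T.card ≤ 2*k → d * (1-ε) * T.card ≤ ((T.biUnion N).card : ℝ))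
    (hdeg : ∀ i, ((N i).card : ℝ) ≤ d * (1 + ε))
    (ha : Antitone fun i => |x i|)
    (hx : ∀ y, ∑ i ∈ Finset.range n, (if y ∈ N i then x i else 0) = 0)
    (hsn : s ≤ n) (hsk : s ≤ k) (hs : 0 < s) :
    (1 - 5*ε) * ∑ i ∈ Finset.range s, |x i| ≤ 4*ε * ∑ i ∈ Finset.range n, |x i| := by
  set U := (Finset.range s).biUnion N with hU
  have hdegs : ∀ T : Finset ℕ, ((∑ i ∈ T, (N i).card : ℕ) : ℝ) ≤ d * (1+ε) * T.card := by
    intro T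
    push_cast
    refine (Finset.sum_le_card_nsmul _ _ _ fun i _ => hdeg i).trans ?_
    rw [nsmul_eq_mul, mul_comm]
  -- row inequality
  have hrow : ∀ y, ∑ i ∈ Finset.range s, ((if y ∈ N i then |x i| else 0)
      - 2 * (if y ∈ N i ∩ (Finset.range i).biUnion N then |x i| else 0))
      ≤ ∑ i ∈ Finset.Ico s n, if y ∈ N i ∩ U then |x i| else 0 := by
    intro y
    refine (aux_row N x y s).trans ?_
    by_cases hy : y ∈ U
    · have h := hx y
      rw [← Finset.sum_range_add_sum_Ico _ hsn] at h
      rw [eq_neg_of_add_eq_zero_left h, abs_neg]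
      refine (Finset.abs_sum_le_sum_abs _ _).trans (le_of_eq ?_)
      refine Finset.sum_congr rfl fun i _ => ?_
      simp only [Finset.mem_inter, hy, and_true]
      split_ifs <;> simp
    · have h0 : ∑ i ∈ Finset.range s, (if y ∈ N i then x i else 0) = 0 :=
        Finset.sum_eq_zero fun i hi => by
          rw [if_neg]
          intro hyi
          exact hy (Finset.mem_biUnion.2 ⟨i, hi, hyi⟩)
      rw [h0, abs_zero]
      exact Finset.sum_nonneg fun i _ => by split_ifs <;> simp
  have hsum := Finset.sum_le_sum (s := Finset.univ) fun y _ => hrow y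
  have hcnt : ∀ (A : Finset (Fin m)) (c : ℝ), ∑ y, (if y ∈ A then c else 0) = c * A.card := by
    intro A c
    simp [mul_comm]
  rw [Finset.sum_comm, Finset.sum_comm (s := Finset.univ) (t := Finset.Ico s n)] at hsum
  simp only [Finset.sum_sub_distrib, ← Finset.mul_sum, hcnt] at hsum
  have hW : ∑ i ∈ Finset.Ico s n, |x i| * ((N i ∩ U).card : ℝ)
      ≤ (4*ε*d) * ∑ i ∈ Finset.range n, |x i| := by
    apply aux_window (fun i => |x i|) (fun i => ((N i ∩ U).card : ℝ)) ha (fun i => abs_nonneg _)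
      (fun i => Nat.cast_nonneg _) s n hs
    intro T hT hTc
    have hdisj : Disjoint (Finset.range s) T := by
      rw [Finset.disjoint_left]
      intro i hi hi2
      have := hT hi2
      simp at this hi
      omega
    have h1 : ((∑ i ∈ T, (N i ∩ U).card + (U ∪ T.biUnion N).card : ℕ) : ℝ)
        ≤ ((U.card + ∑ i ∈ T, (N i).card : ℕ) : ℝ) := by exact_mod_cast aux_card N U T
    have h2 : (U.card : ℝ) ≤ ((∑ i ∈ Finset.range s, (N i).card : ℕ) : ℝ) := by
      exact_mod_cast Finset.card_biUnion_le
    have h3 := hdegs (Finset.range s)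
    have h4 := hdegs T
    have hc : (Finset.range s ∪ T).card = s + T.card := by
      rw [Finset.card_union_of_disjoint hdisj]; simp
    have h5 := hexp (Finset.range s ∪ T) (by
      intro i hi
      rcases Finset.mem_union.1 hi with h | h
      · simp at h ⊢; omega
      · have := hT h
        simp at this ⊢; omega) (by omega)
    rw [hc, Finset.union_biUnion, ← hU] at h5
    rw [Finset.card_range] at h3
    push_cast at h1 h2 h3 h4 h5 ⊢
    have h6 : (T.card : ℝ) ≤ s := by exact_mod_cast hTc
    have h7 : ε * d * T.card ≤ ε * d * s := mul_le_mul_of_nonneg_left h6 (by positivity)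
    linarith
  have hP : ∑ i ∈ Finset.range s, (((N i ∩ (Finset.range i).biUnion N).card : ℝ) - 2*ε*d) * |x i| ≤ 0 := by
    apply aux_abel (fun i => |x i|) _ ha (fun i => abs_nonneg _)
    intro t ht
    have h1 : ((∑ i ∈ Finset.range t, (N i ∩ (Finset.range i).biUnion N).card
      + ((Finset.range t).biUnion N).card : ℕ) : ℝ) = ((∑ i ∈ Finset.range t, (N i).card : ℕ) : ℝ) := by
      exact_mod_cast aux_prefix N t
    have h2 := hdegs (Finset.range t)
    have h3 := hexp (Finset.range t) (by intro i; simp; omega) (by simp; omega)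
    rw [Finset.card_range] at h2 h3
    rw [Finset.sum_sub_distrib, Finset.sum_const, Finset.card_range, nsmul_eq_mul]
    push_cast at h1 h2 h3 ⊢
    linarith
  have hD : d * (1-ε) * ∑ i ∈ Finset.range s, |x i| ≤ ∑ i ∈ Finset.range s, |x i| * ((N i).card : ℝ) := by
    rw [Finset.mul_sum]
    refine Finset.sum_le_sum fun i hi => ?_
    have h := hexp {i} (by simp at hi ⊢; omega) (by simp; omega)
    simp at h
    rw [mul_comm]
    exact mul_le_mul_of_nonneg_left h (abs_nonneg _)
  simp only [sub_mul, Finset.sum_sub_distrib, ← Finset.mul_sum] at hP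
  simp only [mul_comm (Nat.cast _ : ℝ) |x _|] at hP
  refine le_of_mul_le_mul_left (a := d) ?_ hd
  linarith


/-- ℓ₁ uncertainty principle for expander kernels: under 2k-expansion with
ε ∈ (0,1/5) and degree bound d(1+ε), any x with Mx = 0 satisfies
‖x_S‖₁ ≤ (4ε/(1-5ε))‖x‖₁ for all S with |S| ≤ k. -/
theorem stmt_17 {m n : ℕ} (M : Matrix (Fin m) (Fin n) ℝ)
    (h01 : ∀ j i, M j i = 0 ∨ M j i = 1)
    (d ε : ℝ) (hd : 0 < d) (hε0 : 0 < ε) (hε1 : ε < 1/5) (k : ℕ)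
    (hexp : ∀ S' : Finset (Fin n), S'.card ≤ 2*k →
      d * (1 - ε) * S'.card
        ≤ ((Finset.univ.filter (fun y : Fin m => ∃ i ∈ S', M y i = 1)).card : ℝ))
    (hdeg : ∀ i : Fin n,
      ((Finset.univ.filter (fun y : Fin m => M y i = 1)).card : ℝ) ≤ d * (1 + ε))
    (x : Fin n → ℝ) (hx : M.mulVec x = 0)
    (S : Finset (Fin n)) (hS : S.card ≤ k) :
    ∑ i ∈ S, |x i| ≤ (4*ε / (1 - 5*ε)) * ∑ i, |x i| := by
  have h5 : 0 < 1 - 5*ε := by linarith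
  rcases Nat.eq_zero_or_pos S.card with hs | hs
  · rw [Finset.card_eq_zero] at hs
    subst hs
    simp only [Finset.sum_empty]
    have : 0 ≤ ∑ i, |x i| := Finset.sum_nonneg fun i _ => abs_nonneg _
    positivity
  set σ := Tuple.sort (fun i => -|x i|) with hσ
  have hmono : Monotone ((fun i => -|x i|) ∘ σ) := Tuple.monotone_sort _
  set X : ℕ → ℝ := fun i => if h : i < n then x (σ ⟨i, h⟩) else 0 with hX
  set N : ℕ → Finset (Fin m) := fun i =>
    if h : i < n then Finset.univ.filter (fun y : Fin m => M y (σ ⟨i, h⟩) = 1) else ∅ with hN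
  have hXf : ∀ i : Fin n, X i = x (σ i) := fun i => by simp [hX]
  have hNf : ∀ i : Fin n, N i = Finset.univ.filter (fun y : Fin m => M y (σ i) = 1) :=
    fun i => by simp [hN]
  have ha : Antitone fun i => |X i| := by
    intro i j hij
    by_cases hj : j < n
    · have hi : i < n := by omega
      have := hmono (show (⟨i, hi⟩ : Fin n) ≤ ⟨j, hj⟩ from hij)
      simp only [Function.comp] at this
      simp only [hX, hi, hj, dif_pos]
      linarith
    · simp [hX, hj]
  have htot : ∑ i ∈ Finset.range n, |X i| = ∑ i, |x i| := by
    rw [Finset.sum_range]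
    simp only [hXf]
    exact Equiv.sum_comp σ fun i => |x i|
  have hSn : S.card ≤ n := by simpa using Finset.card_le_univ S
  have hmain := aux_main n k S.card N X d ε hd hε0 ?_ ?_ ha ?_ hSn hS hs
  · rw [htot] at hmain
    have hT := aux_top (fun i => |X i|) ha
      ((S.map σ.symm.toEmbedding).map Fin.valEmbedding)
    rw [Finset.card_map, Finset.card_map, Finset.sum_map, Finset.sum_map] at hT
    simp only [Fin.valEmbedding_apply, hXf, Equiv.coe_toEmbedding, Equiv.apply_symm_apply] at hT
    rw [div_mul_eq_mul_div, le_div_iff₀ h5]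
    nlinarith
  · intro T hT hTc
    set T' : Finset (Fin n) := Finset.univ.filter (fun i => ((σ.symm i : Fin n) : ℕ) ∈ T) with hT'
    have hTT : (T'.map σ.symm.toEmbedding).map Fin.valEmbedding = T := by
      ext i
      simp only [Finset.mem_map, hT', Finset.mem_filter, Finset.mem_univ, true_and,
        Fin.valEmbedding_apply, Equiv.coe_toEmbedding]
      constructor
      · rintro ⟨a, ⟨b, hb, rfl⟩, rfl⟩
        exact hb
      · intro hi
        have hin : i < n := by simpa using hT hi
        exact ⟨⟨i, hin⟩, ⟨σ ⟨i, hin⟩, by simpa using hi, by simp⟩, rfl⟩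
    have hc : T'.card = T.card := by
      rw [← hTT, Finset.card_map, Finset.card_map]
    have h := hexp T' (by omega)
    rw [hc] at h
    refine h.trans ?_
    norm_cast
    apply Finset.card_le_card
    intro y hy
    simp only [Finset.mem_filter, Finset.mem_univ, true_and] at hy
    obtain ⟨i, hi, hyi⟩ := hy
    rw [Finset.mem_biUnion]
    refine ⟨(σ.symm i : Fin n), by simpa [hT'] using hi, ?_⟩
    rw [hNf]
    simpa using hyi
  · intro i
    by_cases hi : i < n
    · simp only [hN, hi, dif_pos]
      exact hdeg _
    · simp only [hN, hi, dif_neg, not_false_eq_true, Finset.card_empty, Nat.cast_zero]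
      positivity
  · intro y
    have h := congrFun hx y
    rw [Finset.sum_range]
    simp only [hXf, hNf, Finset.mem_filter, Finset.mem_univ, true_and]
    rw [Equiv.sum_comp σ fun i => if M y i = 1 then x i else 0]
    simp only [Matrix.mulVec, dotProduct, Pi.zero_apply] at h
    refine Eq.trans ?_ h
    refine Finset.sum_congr rfl fun i _ => ?_
    rcases h01 y i with h | h <;> simp [h]
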